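/- Let Ξ be a nonempty compact subset of ℝ^d, let ψ_1, …, ψ_m : Ξ → ℝ be continuous, let γ_1, …, γ_m ∈ ℝ, and suppose the ambiguity set 𝒫 is nonempty. Let X be a nonempty set, f₁ : X → ℝ, and Q : X × Ξ → ℝ with Q(x,·) bounded and upper semicontinuous on Ξ for every x ∈ X. Then inf_{x ∈ X} ( f₁(x) + sup_{P ∈ 𝒫} ∫_Ξ Q(x, ξ) dP(ξ) ) equals inf_{x ∈ X} ( f₁(x) + sup { ∑_{j=1}^{m+1} p_j Q(x, ξ_j) : ξ_1, …, ξ_{m+1} ∈ Ξ, p_j ≥ 0, ∑_j p_j = 1, ∑_j p_j ψ_i(ξ_j) ≤ γ_i for all i } ). -/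

import Mathlib

/-!
The mean of an integrable random vector in a finite-dimensional space lies in every convex set,
closed or not, that almost surely contains the vector: otherwise a supporting functional confines
the vector to a hyperplane, and the dimension drops. Applied to `(ψ, q)` on `Ξ`, this replaces a
measure in the ambiguity set by a finitely supported one with the same moments and the same
expectation of `q`.

With the atoms `z i` fixed, finding the best weights is a linear program: maximise
`∑ w i * q (z i)` over the polytope of probability weights with the given moments. The optimum is
attained at an extreme point of the polytope; its support is affinely independent in the moment
space `ℝ^m` and so has at most `m + 1` elements.
-/

open MeasureTheory

open Module (finrank)

open Set (extremePoints)

section IntegralMemConvex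

variable {V : Type*} [NormedAddCommGroup V] [NormedSpace ℝ V] [FiniteDimensional ℝ V]

lemma exists_ne_zero_forall_le_of_notMem_convex {C : Set V} (hC : Convex ℝ C) (hne : C.Nonempty)
    {x : V} (hx : x ∉ C) : ∃ l : StrongDual ℝ V, l ≠ 0 ∧ ∀ c ∈ C, l c ≤ l x := by
  by_cases hint : (interior C).Nonempty
  · exact geometric_hahn_banach_of_nonempty_interior_point hC
      (fun h => hx (interior_subset h)) hint
  have hspan : vectorSpan ℝ C < ⊤ := by
    rw [hC.interior_nonempty_iff_affineSpan_eq_top,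
      AffineSubspace.affineSpan_eq_top_iff_vectorSpan_eq_top_of_nonempty ℝ V V hne] at hint
    exact lt_top_iff_ne_top.2 hint
  obtain ⟨l, hl, hker⟩ := Submodule.exists_le_ker_of_lt_top _ hspan
  obtain ⟨c₀, hc₀⟩ := hne
  have hconst : ∀ c ∈ C, l c = l c₀ := fun c hc =>
    sub_eq_zero.1 <| by simpa using hker (vsub_mem_vectorSpan ℝ hc hc₀)
  have hl' : l.toContinuousLinearMap ≠ 0 := by simpa using hl
  rcases le_total (l c₀) (l x) with h | h
  · exact ⟨l.toContinuousLinearMap, hl', fun c hc => by simpa [hconst c hc] using h⟩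
  · exact ⟨-l.toContinuousLinearMap, neg_ne_zero.2 hl', fun c hc => by simpa [hconst c hc] using h⟩

variable {Ω : Type*} [MeasurableSpace Ω] {μ : Measure Ω} [IsProbabilityMeasure μ]

lemma exists_ne_zero_ae_eq_of_integral_notMem_convex {C : Set V} (hC : Convex ℝ C) {f : Ω → V}
    (hf : Integrable f μ) (hfC : ∀ᵐ ω ∂μ, f ω ∈ C) (hmean : ∫ ω, f ω ∂μ ∉ C) :
    ∃ l : StrongDual ℝ V, l ≠ 0 ∧ ∀ᵐ ω ∂μ, l (f ω) = l (∫ ω, f ω ∂μ) := by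
  obtain ⟨ω₀, hω₀⟩ := hfC.exists
  obtain ⟨l, hl, hle⟩ := exists_ne_zero_forall_le_of_notMem_convex hC ⟨_, hω₀⟩ hmean
  refine ⟨l, hl, (integral_eq_iff_of_ae_le (l.integrable_comp hf) (integrable_const _)
    (hfC.mono fun ω hω => hle _ hω)).1 ?_⟩
  simpa using l.integral_comp_comm hf

theorem integral_mem_of_convex_of_finiteDimensional {C : Set V} (hC : Convex ℝ C) {f : Ω → V}
    (hf : Integrable f μ) (hfC : ∀ᵐ ω ∂μ, f ω ∈ C) : ∫ ω, f ω ∂μ ∈ C := by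
  induction hn : finrank ℝ V using Nat.strong_induction_on generalizing V with
  | _ n ih =>
    by_contra hmean
    obtain ⟨l, hl, hlf⟩ := exists_ne_zero_ae_eq_of_integral_notMem_convex hC hf hfC hmean
    set v := ∫ ω, f ω ∂μ with hv
    let K : Submodule ℝ V := l.ker
    obtain ⟨proj, hproj⟩ := Submodule.ClosedComplemented.of_finiteDimensional K
    have hfv : Integrable (fun ω => f ω - v) μ := hf.sub (integrable_const v)
    have hzero : ∫ ω, proj (f ω - v) ∂μ = 0 := by
      rw [proj.integral_comp_comm hfv, integral_sub hf (integrable_const v)]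
      simp [← hv]
    have hK : finrank ℝ K < n := by
      refine hn ▸ Submodule.finrank_lt fun h => hl ?_
      ext x
      exact (h ▸ Submodule.mem_top : x ∈ K)
    have hmem := ih _ hK (C := {k : K | v + k ∈ C})
      (hC.translate_preimage_right v |>.linear_preimage K.subtype) (proj.integrable_comp hfv)
      (by
        filter_upwards [hfC, hlf] with ω hω hlω
        have hker : f ω - v ∈ K := by simp [K, hlω]
        simpa [hproj ⟨_, hker⟩] using hω) rfl
    rw [hzero] at hmem
    exact hmean (by simpa using hmem)

end IntegralMemConvex

lemma exists_mem_extremePoints_forall_le {W : Type*} [AddCommGroup W] [Module ℝ W]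
    [TopologicalSpace W] [T2Space W] [IsTopologicalAddGroup W] [ContinuousSMul ℝ W]
    [LocallyConvexSpace ℝ W] {K : Set W} (hK : IsCompact K) (hne : K.Nonempty)
    (l : StrongDual ℝ W) : ∃ x ∈ extremePoints ℝ K, ∀ y ∈ K, l y ≤ l x := by
  have hexp : IsExposed ℝ K (l.toExposed K) := ContinuousLinearMap.toExposed.isExposed
  have hmax : (l.toExposed K).Nonempty := hK.exists_isMaxOn hne l.continuous.continuousOn
  obtain ⟨x, hx⟩ := (hexp.isCompact hK).extremePoints_nonempty hmax
  exact ⟨x, hexp.isExtreme.extremePoints_subset_extremePoints hx, hx.1.2⟩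

lemma sum_extend_zero_smul {α β R M : Type*} [Fintype α] [Fintype β] [Semiring R]
    [AddCommMonoid M] [Module R M] {e : α → β} (he : Function.Injective e) (w : α → R) (u : β → M) :
    ∑ j, Function.extend e w 0 j • u j = ∑ i, w i • u (e i) := by
  refine (Fintype.sum_of_injective e he _ _ (fun j hj => ?_) fun i => ?_).symm
  · rw [Function.extend_apply' _ _ _ hj, Pi.zero_apply, zero_smul]
  · rw [he.extend_apply]

lemma sum_subtype_ne_zero_smul {ι R M : Type*} [Fintype ι] [Semiring R] [AddCommMonoid M]
    [Module R M] (w : ι → R) [Fintype {i // w i ≠ 0}] (u : ι → M) :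
    ∑ i : {i // w i ≠ 0}, w i • u i = ∑ i, w i • u i :=
  Fintype.sum_of_injective _ Subtype.val_injective _ _
    (fun i hi => by
      have hwi : w i = 0 := by simpa using hi
      rw [hwi, zero_smul])
    fun _ => rfl

section BarycentricWeights

variable {ι V : Type*} [Fintype ι] [AddCommGroup V] [Module ℝ V]

/-- The polytope of probability weights on `ι` under which the points `v i` have barycenter `b`;
it is the feasible set of the linear program that selects the best weights on given atoms. -/
def barycentricWeights (v : ι → V) (b : V) : Set (ι → ℝ) :=
  {w | w ∈ stdSimplex ℝ ι ∧ ∑ i, w i • v i = b}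

lemma isCompact_barycentricWeights (v : ι → V) (b : V) : IsCompact (barycentricWeights v b) := by
  have hclosed : IsClosed {w : ι → ℝ | ∑ i, w i • v i = b} := by
    convert! ((AffineSubspace.mk' b ⊥).comap
      (Fintype.linearCombination ℝ v).toAffineMap).closed_of_finiteDimensional
    ext w
    simp [Fintype.linearCombination_apply, AffineSubspace.mem_mk', sub_eq_zero]
  exact (isCompact_stdSimplex ℝ ι).inter_right hclosed

variable {v : ι → V} {b : V}

lemma eventually_add_smul_mem_barycentricWeights {w g : ι → ℝ} (hw : w ∈ barycentricWeights v b)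
    (hsupp : ∀ i, w i = 0 → g i = 0) (hg : ∑ i, g i = 0) (hgv : ∑ i, g i • v i = 0) :
    ∀ᶠ t : ℝ in nhds 0, w + t • g ∈ barycentricWeights v b := by
  have hnonneg : ∀ᶠ t : ℝ in nhds 0, ∀ i, 0 ≤ w i + t * g i := by
    refine Filter.eventually_all.2 fun i => ?_
    rcases (hw.1.1 i).eq_or_lt' with hi | hi
    · simp [hi, hsupp i hi]
    · have hcont : ContinuousAt (fun t : ℝ => w i + t * g i) 0 := by fun_prop
      filter_upwards [hcont.eventually_const_lt (by simpa using hi)] with t ht using ht.le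
  filter_upwards [hnonneg] with t ht
  refine ⟨⟨ht, ?_⟩, ?_⟩
  · simp [Finset.sum_add_distrib, ← Finset.mul_sum, hg, hw.1.2]
  · simp [add_smul, mul_smul, Finset.sum_add_distrib, ← Finset.smul_sum, hgv, hw.2]

lemma eq_zero_of_mem_extremePoints_barycentricWeights {w g : ι → ℝ}
    (hw : w ∈ extremePoints ℝ (barycentricWeights v b)) (hsupp : ∀ i, w i = 0 → g i = 0)
    (hg : ∑ i, g i = 0) (hgv : ∑ i, g i • v i = 0) : g = 0 := by
  have hev := eventually_add_smul_mem_barycentricWeights hw.1 hsupp hg hgv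
  have hev' : ∀ᶠ t : ℝ in nhds 0, w + (-t) • g ∈ barycentricWeights v b :=
    (continuous_neg.tendsto' (0 : ℝ) 0 neg_zero).eventually hev
  obtain ⟨t, ht, hadd, hsub⟩ := (hev.and hev').exists_gt
  have hmid : w ∈ openSegment ℝ (w + t • g) (w + (-t) • g) :=
    ⟨1 / 2, 1 / 2, by norm_num, by norm_num, by norm_num, by module⟩
  have htg : t • g = 0 := by simpa using hw.2 hadd hsub hmid
  exact (smul_eq_zero.1 htg).resolve_left ht.ne'

lemma affineIndependent_of_mem_extremePoints_barycentricWeights {w : ι → ℝ}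
    (hw : w ∈ extremePoints ℝ (barycentricWeights v b)) :
    AffineIndependent ℝ fun i : {i // w i ≠ 0} => v i := by
  classical
  refine (affineIndependent_iff_of_fintype ℝ _).2 fun g hg hgv i => ?_
  rw [Finset.weightedVSub_eq_linear_combination _ hg] at hgv
  have hval : Function.Injective (Subtype.val : {i // w i ≠ 0} → ι) := Subtype.val_injective
  have hzero : Function.extend Subtype.val g 0 = 0 :=
    eq_zero_of_mem_extremePoints_barycentricWeights hw
      (fun i hi => Function.extend_apply' _ _ _ fun ⟨j, hj⟩ => j.2 (hj ▸ hi))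
      (by simpa [hg] using sum_extend_zero_smul hval g fun _ => (1 : ℝ))
      (by rw [sum_extend_zero_smul hval, hgv])
  rw [← hval.extend_apply g 0 i, hzero, Pi.zero_apply]

lemma card_support_le_of_mem_extremePoints_barycentricWeights [FiniteDimensional ℝ V] {w : ι → ℝ}
    (hw : w ∈ extremePoints ℝ (barycentricWeights v b)) :
    Fintype.card {i // w i ≠ 0} ≤ finrank ℝ V + 1 :=
  (affineIndependent_of_mem_extremePoints_barycentricWeights hw).card_le_finrank_succ.trans <|
    Nat.add_le_add_right (Submodule.finrank_le _) 1

lemma exists_barycentricWeights_card_support_le [FiniteDimensional ℝ V] {w : ι → ℝ}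
    (hw : w ∈ barycentricWeights v b) (q : ι → ℝ) :
    ∃ w' ∈ barycentricWeights v b,
      Fintype.card {i // w' i ≠ 0} ≤ finrank ℝ V + 1 ∧ ∑ i, w i * q i ≤ ∑ i, w' i * q i := by
  let objective : StrongDual ℝ (ι → ℝ) := ∑ i, q i • ContinuousLinearMap.proj i
  obtain ⟨w', hw', hmax⟩ :=
    exists_mem_extremePoints_forall_le (isCompact_barycentricWeights v b) ⟨w, hw⟩ objective
  refine ⟨w', hw'.1, card_support_le_of_mem_extremePoints_barycentricWeights hw', ?_⟩
  simpa [objective, mul_comm] using hmax w hw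

end BarycentricWeights

lemma exists_fin_reindex_of_card_support_le {ι M : Type*} [Fintype ι] [AddCommMonoid M] [Module ℝ M]
    {w : ι → ℝ} (hw : w ∈ stdSimplex ℝ ι) {N : ℕ} (hN : Fintype.card {i // w i ≠ 0} ≤ N) :
    ∃ w' ∈ stdSimplex ℝ (Fin N), ∃ σ : Fin N → ι,
      ∀ u : ι → M, ∑ j, w' j • u (σ j) = ∑ i, w i • u i := by
  obtain ⟨e⟩ : Nonempty ({i // w i ≠ 0} ↪ Fin N) :=
    Function.Embedding.nonempty_of_card_le (by simpa using hN)
  obtain ⟨i₀, -, hi₀⟩ : ∃ i ∈ Finset.univ, w i ≠ 0 :=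
    Finset.exists_ne_zero_of_sum_ne_zero (by simp [hw.2])
  have : Nonempty {i // w i ≠ 0} := ⟨⟨i₀, hi₀⟩⟩
  refine ⟨Function.extend e (fun i => w i) 0, ⟨fun j => ?_, ?_⟩,
    fun j => (Function.invFun e j : {i // w i ≠ 0}), fun u => ?_⟩
  · exact Function.extend_nonneg (f := e) (g := fun i => w i) (fun i => hw.1 i) le_rfl j
  · calc ∑ j, Function.extend e (fun i => w i) 0 j
        = ∑ i : {i // w i ≠ 0}, w i := by
          simpa using sum_extend_zero_smul e.injective (fun i => w i) fun _ => (1 : ℝ)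
      _ = ∑ i, w i := by simpa using sum_subtype_ne_zero_smul w fun _ => (1 : ℝ)
      _ = 1 := hw.2
  · rw [sum_extend_zero_smul e.injective, ← sum_subtype_ne_zero_smul w u]
    simp only [Function.leftInverse_invFun e.injective _]

theorem exists_fin_atoms_of_integrable {E V : Type*} [MeasurableSpace E] [NormedAddCommGroup V]
    [NormedSpace ℝ V] [FiniteDimensional ℝ V] {P : Measure E} [IsProbabilityMeasure P] {Ξ : Set E}
    (hP : ∀ᵐ z ∂P, z ∈ Ξ) {f : E → V} {q : E → ℝ} (hf : Integrable f P) (hq : Integrable q P)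
    {N : ℕ} (hN : finrank ℝ V < N) :
    ∃ (z : Fin N → E) (w : Fin N → ℝ), (∀ j, z j ∈ Ξ) ∧ w ∈ stdSimplex ℝ (Fin N) ∧
      ∑ j, w j • f (z j) = ∫ y, f y ∂P ∧ ∫ y, q y ∂P ≤ ∑ j, w j * q (z j) := by
  have hmean : ∫ y, (f y, q y) ∂P ∈ convexHull ℝ ((fun y => (f y, q y)) '' Ξ) :=
    integral_mem_of_convex_of_finiteDimensional (convex_convexHull ℝ _) (hf.prodMk hq) <|
      hP.mono fun y hy => subset_convexHull ℝ _ (Set.mem_image_of_mem _ hy)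
  rw [integral_pair hf hq] at hmean
  obtain ⟨ι, _, w, a, hw, hw1, ha, hsum⟩ := mem_convexHull_iff_exists_fintype.1 hmean
  choose z hz hza using ha
  obtain ⟨hwf, hwq⟩ : ∑ i, w i • f (z i) = ∫ y, f y ∂P ∧ ∑ i, w i * q (z i) = ∫ y, q y ∂P := by
    simpa [← hza, Prod.ext_iff, Prod.fst_sum, Prod.snd_sum] using hsum
  obtain ⟨w', ⟨hw', hw'f⟩, hcard, hle⟩ :=
    exists_barycentricWeights_card_support_le ⟨⟨hw, hw1⟩, hwf⟩ (q ∘ z)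
  obtain ⟨p, hp, σ, hσ⟩ := exists_fin_reindex_of_card_support_le (M := V × ℝ) hw' (hcard.trans hN)
  obtain ⟨hpf, hpq⟩ : ∑ j, p j • f (z (σ j)) = ∑ i, w' i • f (z i) ∧
      ∑ j, p j * q (z (σ j)) = ∑ i, w' i * q (z i) := by
    simpa [Prod.ext_iff, Prod.fst_sum, Prod.snd_sum] using hσ fun i => (f (z i), q (z i))
  exact ⟨z ∘ σ, p, fun j => hz _, hp, hpf.trans hw'f, hwq.ge.trans (hle.trans hpq.ge)⟩

section AtomicMeasure

variable {κ E : Type*} [Fintype κ] [MeasurableSpace E] {w : κ → ℝ} {z : κ → E}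

/-- The measure with mass `w j` at each atom `z j`, which turns a feasible point of the discrete
problem into a member of the ambiguity set. Negative weights are truncated to `0`, and masses
of coinciding atoms add up. -/
noncomputable def atomicMeasure (w : κ → ℝ) (z : κ → E) : Measure E :=
  ∑ j, ENNReal.ofReal (w j) • Measure.dirac (z j)

lemma isProbabilityMeasure_atomicMeasure (hw : w ∈ stdSimplex ℝ κ) (z : κ → E) :
    IsProbabilityMeasure (atomicMeasure w z) := by
  constructor
  simp [atomicMeasure, ← ENNReal.ofReal_sum_of_nonneg fun j _ => hw.1 j, hw.2]

variable [MeasurableSingletonClass E]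

lemma atomicMeasure_compl_eq_zero {Ξ : Set E} (w : κ → ℝ) (hz : ∀ j, z j ∈ Ξ) :
    atomicMeasure w z Ξᶜ = 0 := by
  simp [atomicMeasure, hz]

lemma integral_atomicMeasure {F : Type*} [NormedAddCommGroup F] [NormedSpace ℝ F] [CompleteSpace F]
    (hw : ∀ j, 0 ≤ w j) (z : κ → E) (f : E → F) :
    ∫ y, f y ∂atomicMeasure w z = ∑ j, w j • f (z j) := by
  rw [atomicMeasure, integral_finsetSum_measure fun j _ =>
    (integrable_dirac (by simp)).smul_measure ENNReal.ofReal_ne_top]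
  simp [hw]

end AtomicMeasure

section WorstCase

variable {ι E : Type*} [MeasurableSpace E]

/-- The ambiguity set `𝒫` of probability measures carried by `Ξ` whose moments satisfy
`∫ ψ i ≤ γ i`. Measures on `Ξ` are encoded as measures on the ambient space which vanish off `Ξ`;
an integral which does not exist counts as `0`. -/
def ambiguitySet (Ξ : Set E) (ψ : ι → E → ℝ) (γ : ι → ℝ) : Set (Measure E) :=
  {P | IsProbabilityMeasure P ∧ P Ξᶜ = 0 ∧ ∀ i, ∫ z, ψ i z ∂P ≤ γ i}

/-- The worst-case expected cost `sup_{P ∈ 𝒫} ∫ q dP`, with value `0` if the supremum is over an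
empty or unbounded set. -/
noncomputable def worstCaseExpectation (Ξ : Set E) (ψ : ι → E → ℝ) (γ : ι → ℝ) (q : E → ℝ) : ℝ :=
  sSup ((fun P => ∫ z, q z ∂P) '' ambiguitySet Ξ ψ γ)

/-- The worst-case expected cost over the members of the ambiguity set with at most `N` atoms,
described by atoms `ξ` and weights `p`. -/
noncomputable def discreteWorstCaseExpectation (N : ℕ) (Ξ : Set E) (ψ : ι → E → ℝ) (γ : ι → ℝ)
    (q : E → ℝ) : ℝ :=
  sSup {r : ℝ | ∃ (ξ : Fin N → E) (p : Fin N → ℝ),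
    (∀ j, ξ j ∈ Ξ) ∧ (∀ j, 0 ≤ p j) ∧ (∑ j, p j = 1) ∧
    (∀ i, ∑ j, p j * ψ i (ξ j) ≤ γ i) ∧ (∑ j, p j * q (ξ j)) = r}

variable {Ξ : Set E} {ψ : ι → E → ℝ} {γ : ι → ℝ} {q : E → ℝ}

lemma atomicMeasure_mem_ambiguitySet [MeasurableSingletonClass E] {κ : Type*} [Fintype κ]
    {w : κ → ℝ} {z : κ → E} (hw : w ∈ stdSimplex ℝ κ) (hz : ∀ j, z j ∈ Ξ)
    (hψ : ∀ i, ∑ j, w j * ψ i (z j) ≤ γ i) : atomicMeasure w z ∈ ambiguitySet Ξ ψ γ :=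
  ⟨isProbabilityMeasure_atomicMeasure hw z, atomicMeasure_compl_eq_zero w hz,
    fun i => (integral_atomicMeasure hw.1 z (ψ i)).trans_le (hψ i)⟩

theorem worstCaseExpectation_eq_discreteWorstCaseExpectation [Fintype ι]
    [MeasurableSingletonClass E] (hψ : ∀ P ∈ ambiguitySet Ξ ψ γ, ∀ i, Integrable (ψ i) P)
    (hq : ∀ P ∈ ambiguitySet Ξ ψ γ, Integrable q P) {N : ℕ} (hN : Fintype.card ι < N) :
    worstCaseExpectation Ξ ψ γ q = discreteWorstCaseExpectation N Ξ ψ γ q := by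
  apply csSup_eq_csSup_of_forall_exists_le
  · rintro _ ⟨P, hP, rfl⟩
    have ⟨_, hPΞ, hPγ⟩ := hP
    obtain ⟨z, w, hz, hw, hmom, hle⟩ := exists_fin_atoms_of_integrable (ae_iff.2 hPΞ)
      (f := fun y i => ψ i y) (Integrable.of_eval (hψ P hP)) (hq P hP) (by simpa using hN)
    have hmom' (i : ι) : ∑ j, w j * ψ i (z j) = ∫ y, ψ i y ∂P := by
      simpa [eval_integral (hψ P hP)] using congrFun hmom i
    exact ⟨_, ⟨z, w, hz, hw.1, hw.2, fun i => (hmom' i).trans_le (hPγ i), rfl⟩, hle⟩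
  · rintro _ ⟨z, w, hz, hw0, hw1, hmom, rfl⟩
    exact ⟨_, ⟨_, atomicMeasure_mem_ambiguitySet ⟨hw0, hw1⟩ hz hmom, rfl⟩,
      (integral_atomicMeasure hw0 z q).ge⟩

end WorstCase

lemma integrable_of_measurable_domRestrict_of_bounded {E : Type*} [MeasurableSpace E]
    {P : Measure E} [IsFiniteMeasure P] {Ξ : Set E} (hΞ : MeasurableSet Ξ) (hP : P Ξᶜ = 0)
    {f : E → ℝ} (hf : Measurable (Ξ.domRestrict f)) (hb : ∃ C, ∀ ξ ∈ Ξ, |f ξ| ≤ C) :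
    Integrable f P := by
  have hmem : ∀ᵐ y ∂P, y ∈ Ξ := ae_iff.2 hP
  obtain ⟨C, hC⟩ := hb
  have hmeas := aemeasurable_restrict_of_measurable_subtype (μ := P) hΞ hf
  rw [Measure.restrict_eq_self_of_ae_mem hmem] at hmeas
  exact .of_bound hmeas.aestronglyMeasurable C (hmem.mono hC)

theorem two_stage_DRO_discrete_reformulation_general {ι E X : Type*} [Fintype ι] [Nonempty X]
    [MeasurableSpace E] [MeasurableSingletonClass E] {Ξ : Set E} (hΞ : MeasurableSet Ξ)
    {ψ : ι → E → ℝ} (hψm : ∀ i, Measurable (Ξ.domRestrict (ψ i)))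
    (hψb : ∀ i, ∃ C, ∀ ξ ∈ Ξ, |ψ i ξ| ≤ C) {γ : ι → ℝ} (_hamb : (ambiguitySet Ξ ψ γ).Nonempty)
    (f₁ : X → ℝ) {Q : X → E → ℝ} (hQm : ∀ x, Measurable (Ξ.domRestrict (Q x)))
    (hQb : ∀ x, ∃ C, ∀ ξ ∈ Ξ, |Q x ξ| ≤ C) {N : ℕ} (hN : Fintype.card ι < N) :
    ⨅ x, (f₁ x + worstCaseExpectation Ξ ψ γ (Q x)) =
      ⨅ x, (f₁ x + discreteWorstCaseExpectation N Ξ ψ γ (Q x)) := by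
  have hint {f : E → ℝ} (hm : Measurable (Ξ.domRestrict f)) (hb : ∃ C, ∀ ξ ∈ Ξ, |f ξ| ≤ C) :
      ∀ P ∈ ambiguitySet Ξ ψ γ, Integrable f P := fun _ ⟨_, hPΞ, _⟩ =>
    integrable_of_measurable_domRestrict_of_bounded hΞ hPΞ hm hb
  refine iInf_congr fun x => congrArg (f₁ x + ·) ?_
  exact worstCaseExpectation_eq_discreteWorstCaseExpectation
    (fun P hP i => hint (hψm i) (hψb i) P hP) (hint (hQm x) (hQb x)) hN

/-- (Equivalent reformulation of two-stage DRO.) With continuous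
moment functions `ψ_i` on the nonempty compact set `Ξ`, a nonempty ambiguity set, and
a recourse value function `Q(x, ·)` bounded and upper semicontinuous on `Ξ` for every
first-stage decision `x`, the two-stage DRO value equals the value obtained by
replacing the inner worst-case expectation by the supremum over distributions supported
on at most `m + 1` points of `Ξ`. -/
theorem two_stage_DRO_discrete_reformulation
    (d m : ℕ) (Ξ : Set (EuclideanSpace ℝ (Fin d)))
    (hΞne : Ξ.Nonempty) (hΞc : IsCompact Ξ)
    (ψ : Fin m → EuclideanSpace ℝ (Fin d) → ℝ)
    (hψc : ∀ i, ContinuousOn (ψ i) Ξ)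
    (γ : Fin m → ℝ)
    (hamb : ∃ P : Measure (EuclideanSpace ℝ (Fin d)),
      IsProbabilityMeasure P ∧ P Ξᶜ = 0 ∧ ∀ i, ∫ x, ψ i x ∂P ≤ γ i)
    (X : Type*) [Nonempty X] (f₁ : X → ℝ)
    (Q : X → EuclideanSpace ℝ (Fin d) → ℝ)
    (hQu : ∀ x, UpperSemicontinuousOn (Q x) Ξ)
    (hQb : ∀ x, ∃ C, ∀ ξ' ∈ Ξ, |Q x ξ'| ≤ C) :
    (⨅ x : X, (f₁ x +
        sSup {r : ℝ | ∃ P : Measure (EuclideanSpace ℝ (Fin d)),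
          (IsProbabilityMeasure P ∧ P Ξᶜ = 0 ∧ ∀ i, ∫ z, ψ i z ∂P ≤ γ i) ∧
          (∫ z, Q x z ∂P) = r})) =
      (⨅ x : X, (f₁ x +
        sSup {r : ℝ | ∃ (ξv : Fin (m + 1) → EuclideanSpace ℝ (Fin d))
            (p : Fin (m + 1) → ℝ),
          (∀ j, ξv j ∈ Ξ) ∧ (∀ j, 0 ≤ p j) ∧ (∑ j, p j = 1) ∧
          (∀ i, ∑ j, p j * ψ i (ξv j) ≤ γ i) ∧
          (∑ j, p j * Q x (ξv j)) = r})) :=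
  two_stage_DRO_discrete_reformulation_general hΞc.measurableSet
    (fun i => (hψc i).domRestrict.measurable) (fun i => hΞc.exists_bound_of_continuousOn (hψc i))
    hamb f₁ (fun x => (upperSemicontinuousOn_iff_restrict.2 (hQu x)).measurable) hQb (by simp)
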